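/- For every k ≥ 3, the extended wheel graph XW_{2k} has book thickness exactly four: it admits a 4-page book embedding (its planar skeleton has the Hamiltonian cycle p, v_2, v_1, q, v_3, v_4, ..., v_{2k}, p), and as an optimal 1-planar graph its book thickness is at least four. -/

import Mathlib

open Set

/-- A `k`-page book embedding of a graph: a linear ordering of the vertices (an
injective position function) together with an assignment of every edge to one of
`k` pages such that no two edges on the same page twist; edges `{a, b}` and
`{c, d}` twist if their endpoints interleave in the linear ordering. -/
structure SimpleGraph.BookEmbedding {V : Type*} (G : SimpleGraph V) (k : ℕ) where
  pos : V → ℕ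
  pos_inj : Function.Injective pos
  page : V → V → Fin k
  page_symm : ∀ a b : V, page a b = page b a
  no_twist : ∀ a b c d : V, G.Adj a b → G.Adj c d → page a b = page c d →
    pos a < pos c → pos c < pos b → pos b < pos d → False

/-- The book thickness of a graph: the least number of pages of a book embedding. -/
noncomputable def SimpleGraph.bookThickness {V : Type*} (G : SimpleGraph V) : ℕ :=
  sInf {k | Nonempty (G.BookEmbedding k)}

/-- The extended wheel graph `XW_{2k}`: a cycle `v_1, …, v_{2k}` (here modelled on
`ZMod (2 * k)`), two poles `p` and `q` (here `Sum.inr true` and `Sum.inr false`)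
joined to every cycle vertex but not to each other, together with all edges
`{v_i, v_{i+2}}` (indices modulo `2k`). -/
def extendedWheel (k : ℕ) : SimpleGraph (ZMod (2 * k) ⊕ Bool) :=
  SimpleGraph.fromRel fun a b =>
    match a, b with
    | Sum.inl i, Sum.inl j => j = i + 1 ∨ j = i + 2
    | Sum.inl _, Sum.inr _ => True
    | _, _ => False

/-!
For the upper bound, put the vertices on the spine in the order of the Hamiltonian cycle of the
planar skeleton. The squares `{v_i, v_{i+2}}` then split into an even and an odd chain, and the two
stars at the poles absorb the few edges that jump over the first positions.

For the lower bound, in a noncrossing family of chords every chord `(a, b)` that spans some vertex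
spans one not covered by a smaller chord of the family, and distinct chords give distinct such
vertices. Hence a page contains at most `n - 3` chords besides the `n` that join cyclically
consecutive vertices, and `m` pages carry at most `n + m (n - 3)` edges. Three pages carry
`4 n - 9`, one less than an optimal 1-planar graph has.
-/

/-- A set of chords `(a, b)`, listed with their left endpoint first, no two of which twist: this is
what the edges on one page of a book embedding look like along the spine. -/
def IsNoncrossing {α : Type*} [LT α] (S : Set (α × α)) : Prop :=
  ∀ e ∈ S, ∀ f ∈ S, e.1 < f.1 → f.1 < e.2 → ¬ e.2 < f.2

namespace IsNoncrossing

variable {α : Type*} [LinearOrder α]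

theorem nested {S : Set (α × α)} (hS : IsNoncrossing S) {e f : α × α} (he : e ∈ S) (hf : f ∈ S)
    {c : α} (hce : c ∈ Ioo e.1 e.2) (hcf : c ∈ Ioo f.1 f.2) :
    (e.1 ≤ f.1 ∧ f.2 ≤ e.2) ∨ (f.1 ≤ e.1 ∧ e.2 ≤ f.2) := by
  have hef := hS e he f hf
  have hfe := hS f hf e he
  have := hce.1.trans hcf.2
  have := hcf.1.trans hce.2
  grind

theorem insert_bounds {S : Set (α × α)} (hS : IsNoncrossing S) {l r : α}
    (hbd : ∀ e ∈ S, l ≤ e.1 ∧ e.2 ≤ r) : IsNoncrossing (insert (l, r) S) := by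
  rintro e (rfl | he) f (rfl | hf) h₁ h₂ h₃
  · exact h₁.false
  · exact h₃.not_ge (hbd f hf).2
  · exact h₁.not_ge (hbd e he).1
  · exact hS e he f hf h₁ h₂ h₃

variable [LocallyFiniteOrder α]

theorem exists_uncovered {S : Set (α × α)} (hS : IsNoncrossing S) {a b : α}
    (hab : (Ioo a b).Nonempty) :
    ∃ c ∈ Ioo a b, ∀ f ∈ S, a ≤ f.1 → f.2 ≤ b → f ≠ (a, b) → c ∉ Ioo f.1 f.2 := by
  classical
  -- Take the farthest partner `c` of `a` inside `(a, b)`, or the successor of `a` if there is none.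
  obtain ⟨d, hd, hd_min⟩ :=
    (Finset.Ioo a b).exists_min_image id (by simpa [← Finset.coe_nonempty] using hab)
  obtain ⟨c, hc, hc_max⟩ :=
    {x ∈ Finset.Ioo a b | x = d ∨ (a, x) ∈ S}.exists_max_image id ⟨d, by simp [hd]⟩
  simp only [Finset.mem_filter, Finset.mem_Ioo, id] at hd hd_min hc hc_max
  refine ⟨c, hc.1, fun f hf haf hfb hne hcf => ?_⟩
  rcases haf.eq_or_lt with hfa | hfa
  · have hfb' : f.2 < b := hfb.lt_of_ne fun h => hne (Prod.ext hfa.symm h)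
    have : f.2 ≤ c := hc_max f.2 ⟨⟨hc.1.1.trans hcf.2, hfb'⟩, .inr (by simpa [hfa] using hf)⟩
    exact this.not_gt hcf.2
  · rcases hc.2 with rfl | hac
    · exact (hd_min f.1 ⟨hfa, hcf.1.trans hc.1.2⟩).not_gt hcf.1
    · exact hS _ hac f hf hfa hcf.1 hcf.2

theorem card_le_card_Ioo {S : Finset (α × α)} (hS : IsNoncrossing (S : Set (α × α))) {l r : α}
    (hbd : ∀ e ∈ S, l ≤ e.1 ∧ e.2 ≤ r) (hlong : ∀ e ∈ S, (Ioo e.1 e.2).Nonempty) :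
    S.card ≤ (Finset.Ioo l r).card := by
  refine Finset.card_le_card_of_forall_subsingleton
    (fun e c => c ∈ Ioo e.1 e.2 ∧
      ∀ f ∈ S, e.1 ≤ f.1 → f.2 ≤ e.2 → f ≠ e → c ∉ Ioo f.1 f.2)
    (fun e he => ?_) fun c _ e ⟨he, hce, he_uncovered⟩ f ⟨hf, hcf, hf_uncovered⟩ => ?_
  · obtain ⟨c, hce, hc⟩ := hS.exists_uncovered (hlong e he)
    have hc_mem : c ∈ Finset.Ioo l r :=
      Finset.mem_Ioo.2 ⟨(hbd e he).1.trans_lt hce.1, hce.2.trans_le (hbd e he).2⟩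
    exact ⟨c, hc_mem, hce, hc⟩
  · by_contra hne
    rcases hS.nested he hf hce hcf with ⟨h₁, h₂⟩ | ⟨h₁, h₂⟩
    · exact he_uncovered f hf h₁ h₂ (Ne.symm hne) hcf
    · exact hf_uncovered e he h₁ h₂ hne hce

theorem card_le_card_Ioo_sub_one {S : Finset (α × α)} (hS : IsNoncrossing (S : Set (α × α)))
    {l r : α} (hbd : ∀ e ∈ S, l ≤ e.1 ∧ e.2 ≤ r) (hlong : ∀ e ∈ S, (Ioo e.1 e.2).Nonempty)
    (hlr : (l, r) ∉ S) : S.card ≤ (Finset.Ioo l r).card - 1 := by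
  classical
  rcases S.eq_empty_or_nonempty with rfl | ⟨e, he⟩
  · simp
  obtain ⟨c, hc⟩ := hlong e he
  have hlc : l < c := (hbd e he).1.trans_lt hc.1
  have hcr : c < r := hc.2.trans_le (hbd e he).2
  have hlr_long : (Ioo l r).Nonempty := ⟨c, hlc, hcr⟩
  have hinsert := card_le_card_Ioo (S := insert (l, r) S) (l := l) (r := r)
    (by simpa using hS.insert_bounds hbd) (by simpa using hbd) (by simpa [hlr_long] using hlong)
  rw [Finset.card_insert_of_notMem hlr] at hinsert
  omega

end IsNoncrossing

section ChordCount

variable {α : Type*} [Fintype α] [LinearOrder α] [BoundedOrder α]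

theorem card_lt_card_of_forall_covBy {E : Finset (α × α)} (hE : ∀ e ∈ E, e.1 ⋖ e.2) :
    E.card < Fintype.card α := by
  have hmaps : ∀ e ∈ E, e.1 ∈ Finset.univ.erase (⊤ : α) := fun e he =>
    Finset.mem_erase.2 ⟨(hE e he).lt.ne_top, Finset.mem_univ _⟩
  have hinj : (E : Set (α × α)).InjOn Prod.fst := fun e he f hf hef =>
    Prod.ext hef ((hE e he).unique_right (hef ▸ hE f hf))
  calc E.card ≤ (Finset.univ.erase (⊤ : α)).card := Finset.card_le_card_of_injOn _ hmaps hinj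
    _ < Fintype.card α := Finset.card_erase_lt_of_mem (Finset.mem_univ _)

theorem card_le_mul_of_isNoncrossing_pages [LocallyFiniteOrder α] {m : ℕ} {E : Finset (α × α)}
    (page : α × α → Fin m) (hpage : ∀ i, IsNoncrossing {e | e ∈ E ∧ page e = i})
    (hlong : ∀ e ∈ E, (Ioo e.1 e.2).Nonempty) (hE : (⊥, ⊤) ∉ E) :
    E.card ≤ m * (Fintype.card α - 3) := by
  have hinner : (Finset.Ioo (⊥ : α) ⊤).card = Fintype.card α - 2 := by
    rw [Finset.card_Ioo_eq_card_Icc_sub_two, Finset.Icc_bot_top, Finset.card_univ]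
  have hfiber (i : Fin m) : {e ∈ E | page e = i}.card ≤ Fintype.card α - 3 := by
    have := IsNoncrossing.card_le_card_Ioo_sub_one (S := {e ∈ E | page e = i}) (l := ⊥) (r := ⊤)
      (by simpa using hpage i) (by simp) (fun e he => hlong e (Finset.mem_filter.1 he).1)
      (fun h => hE (Finset.mem_filter.1 h).1)
    omega
  simpa [mul_comm] using
    Finset.card_le_mul_card_image_of_maps_to (t := Finset.univ) (f := page)
      (fun _ _ => Finset.mem_univ _) _ fun i _ => hfiber i

theorem card_le_card_add_mul_of_isNoncrossing_pages [LocallyFiniteOrder α] {m : ℕ}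
    {E : Finset (α × α)} (page : α × α → Fin m)
    (hpage : ∀ i, IsNoncrossing {e | e ∈ E ∧ page e = i}) (hlt : ∀ e ∈ E, e.1 < e.2) :
    E.card ≤ Fintype.card α + m * (Fintype.card α - 3) := by
  classical
  have hshort : {e ∈ E | e.1 ⋖ e.2}.card < Fintype.card α :=
    card_lt_card_of_forall_covBy fun e he => (Finset.mem_filter.1 he).2
  have hlong : ({e ∈ E | ¬ e.1 ⋖ e.2}.erase (⊥, ⊤)).card ≤ m * (Fintype.card α - 3) := by
    refine card_le_mul_of_isNoncrossing_pages page (fun i e he f hf => ?_) (fun e he => ?_)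
      (Finset.notMem_erase _ _)
    · simp only [Finset.mem_erase, Finset.mem_filter, mem_ofPred_eq] at he hf
      exact hpage i e ⟨he.1.2.1, he.2⟩ f ⟨hf.1.2.1, hf.2⟩
    · have he' := Finset.mem_filter.1 (Finset.mem_of_mem_erase he)
      exact (not_covBy_iff (hlt e he'.1)).1 he'.2
  have hsplit := E.card_filter_add_card_filter_not fun e => e.1 ⋖ e.2
  have herase := Finset.pred_card_le_card_erase (s := {e ∈ E | ¬ e.1 ⋖ e.2}) (a := (⊥, ⊤))
  omega

end ChordCount

/-- The chord, left endpoint first, that an edge becomes when the vertices are placed by `pos`. -/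
def spineChord {V : Type*} (pos : V → ℕ) (e : Sym2 V) : ℕ × ℕ :=
  ((e.map pos).inf, (e.map pos).sup)

theorem spineChord_mk {V : Type*} (pos : V → ℕ) (a b : V) :
    spineChord pos s(a, b) = (min (pos a) (pos b), max (pos a) (pos b)) :=
  rfl

namespace SimpleGraph.BookEmbedding

variable {V : Type*} {G : SimpleGraph V} {m : ℕ}

theorem ncard_edgeSet_le [Finite V] (B : G.BookEmbedding m) :
    G.edgeSet.ncard ≤ Nat.card V + m * (Nat.card V - 3) := by
  classical
  rcases isEmpty_or_nonempty V with hV | hV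
  · simp [Set.eq_empty_of_isEmpty]
  let _ : Fintype V := Fintype.ofFinite V
  let _ : LinearOrder V := LinearOrder.lift' B.pos B.pos_inj
  let _ : BoundedOrder V := Fintype.toBoundedOrder V
  let _ : LocallyFiniteOrder V := Fintype.toLocallyFiniteOrder
  let E : Finset (V × V) := {e | e.1 < e.2 ∧ G.Adj e.1 e.2}
  have hcover : G.edgeSet ⊆ (E.image fun e => s(e.1, e.2) : Finset (Sym2 V)) := by
    intro e he
    induction e with | _ a b =>
    simp only [Finset.coe_image, mem_image, SetLike.mem_coe]
    rcases (G.ne_of_adj he).lt_or_gt with hab | hba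
    · exact ⟨(a, b), by simpa [E] using ⟨hab, he⟩, rfl⟩
    · exact ⟨(b, a), by simpa [E] using ⟨hba, G.adj_symm he⟩, Sym2.eq_swap⟩
  have hpage (i : Fin m) : IsNoncrossing {e | e ∈ E ∧ B.page e.1 e.2 = i} := by
    rintro e ⟨he, hei⟩ f ⟨hf, hfi⟩
    simp only [E, Finset.mem_filter, Finset.mem_univ, true_and] at he hf
    exact B.no_twist e.1 e.2 f.1 f.2 he.2 hf.2 (hei.trans hfi.symm)
  calc G.edgeSet.ncard ≤ E.card := by
        refine (Set.ncard_le_ncard hcover).trans ?_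
        rw [Set.ncard_coe_finset]
        exact Finset.card_image_le
    _ ≤ Nat.card V + m * (Nat.card V - 3) := by
        rw [Nat.card_eq_fintype_card]
        exact card_le_card_add_mul_of_isNoncrossing_pages (fun e => B.page e.1 e.2) hpage
          fun e he => (Finset.mem_filter.1 he).2.1

theorem four_le_of_le_ncard_edgeSet [Finite V] (B : G.BookEmbedding m) (hV : 3 ≤ Nat.card V)
    (hG : 4 * Nat.card V - 8 ≤ G.edgeSet.ncard) : 4 ≤ m := by
  by_contra! hm
  have hle := B.ncard_edgeSet_le
  have : m * (Nat.card V - 3) ≤ 3 * (Nat.card V - 3) := Nat.mul_le_mul_right _ (by omega)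
  omega

theorem nonempty_of_forall_mem_isNoncrossing [NeZero m] {pos : V → ℕ}
    (hpos : Function.Injective pos) {P : Fin m → Set (ℕ × ℕ)} (hP : ∀ i, IsNoncrossing (P i))
    (hcover : ∀ e ∈ G.edgeSet, ∃ i, spineChord pos e ∈ P i) :
    Nonempty (G.BookEmbedding m) := by
  let page (a b : V) : Fin m :=
    Classical.epsilon fun i => spineChord pos s(a, b) ∈ P i
  have hpage {a b : V} (hab : G.Adj a b) (hlt : pos a < pos b) :
      (pos a, pos b) ∈ P (page a b) := by
    have hmem : spineChord pos s(a, b) ∈ P (page a b) :=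
      Classical.epsilon_spec (hcover s(a, b) hab)
    rwa [spineChord_mk, min_eq_left hlt.le, max_eq_right hlt.le] at hmem
  refine ⟨⟨pos, hpos, page, fun a b => by simp only [page, Sym2.eq_swap], ?_⟩⟩
  intro a b c d hab hcd hpages hac hcb hbd
  exact hP _ _ (hpage hab (hac.trans hcb)) _ (hpages ▸ hpage hcd (hcb.trans hbd)) hac hcb hbd

end SimpleGraph.BookEmbedding

namespace extendedWheel

/-- The four families of edges of `XW_{2k}`, indexed by the cycle vertex they start from: cycle
edges, squares, and the edges to the poles `p` and `q`. -/
def edge (k : ℕ) : Fin 4 × ZMod (2 * k) → Sym2 (ZMod (2 * k) ⊕ Bool)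
  | (0, i) => s(.inl i, .inl (i + 1))
  | (1, i) => s(.inl i, .inl (i + 2))
  | (2, i) => s(.inl i, .inr true)
  | (3, i) => s(.inl i, .inr false)

theorem natCast_ne_zero {k c : ℕ} (hc : 0 < c) (hck : c < 2 * k) : (c : ZMod (2 * k)) ≠ 0 := by
  rw [Ne, ZMod.natCast_eq_zero_iff]
  exact Nat.not_dvd_of_pos_of_lt hc hck

theorem edgeSet_eq_range_edge {k : ℕ} (hk : 2 ≤ k) :
    (extendedWheel k).edgeSet = range (edge k) := by
  have h₁ : (1 : ZMod (2 * k)) ≠ 0 := by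
    simpa using natCast_ne_zero (k := k) (c := 1) (by omega) (by omega)
  have h₂ : (2 : ZMod (2 * k)) ≠ 0 := by
    simpa using natCast_ne_zero (k := k) (c := 2) (by omega) (by omega)
  refine subset_antisymm (fun e he => ?_) ?_
  · induction e with | _ a b =>
    rw [SimpleGraph.mem_edgeSet, extendedWheel, SimpleGraph.fromRel_adj] at he
    obtain ⟨-, he⟩ := he
    rcases a with i | a <;> rcases b with j | b
    · rcases he with (rfl | rfl) | (rfl | rfl)
      exacts [⟨(0, i), rfl⟩, ⟨(1, i), rfl⟩, ⟨(0, j), Sym2.eq_swap⟩, ⟨(1, j), Sym2.eq_swap⟩]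
    · cases b
      exacts [⟨(3, i), rfl⟩, ⟨(2, i), rfl⟩]
    · cases a
      exacts [⟨(3, j), Sym2.eq_swap⟩, ⟨(2, j), Sym2.eq_swap⟩]
    · simp at he
  · rintro _ ⟨⟨c, i⟩, rfl⟩
    fin_cases c <;> simp [edge, extendedWheel, h₁, h₂]

theorem edge_injective {k : ℕ} (hk : 3 ≤ k) : Function.Injective (edge k) := by
  have h₁ := natCast_ne_zero (k := k) (c := 1) (by omega) (by omega)
  have h₂ := natCast_ne_zero (k := k) (c := 2) (by omega) (by omega)
  have h₃ := natCast_ne_zero (k := k) (c := 3) (by omega) (by omega)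
  have h₄ := natCast_ne_zero (k := k) (c := 4) (by omega) (by omega)
  push_cast at h₁ h₂ h₃ h₄
  rintro ⟨c, i⟩ ⟨d, j⟩ h
  -- A coincidence of two edges at different places makes one of `1, 2, 3, 4` vanish mod `2k`.
  fin_cases c <;> fin_cases d <;> grind [edge, Sym2.eq_iff]

theorem ncard_edgeSet {k : ℕ} (hk : 3 ≤ k) : (extendedWheel k).edgeSet.ncard = 8 * k := by
  rw [edgeSet_eq_range_edge (by omega), ncard_range_of_injective (edge_injective hk), Nat.card_prod,
    Nat.card_fin, Nat.card_zmod]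
  ring

/-- The order `p, v_2, v_1, q, v_3, …, v_{2k}` of the Hamiltonian cycle of the planar skeleton;
`v_{j + 1}` is the residue `j`. -/
def spinePos (k : ℕ) : ZMod (2 * k) ⊕ Bool → ℕ
  | .inl i => if i.val = 0 then 2 else if i.val = 1 then 1 else i.val + 2
  | .inr true => 0
  | .inr false => 3

theorem spinePos_injective {k : ℕ} (hk : k ≠ 0) : Function.Injective (spinePos k) := by
  have : NeZero (2 * k) := ⟨by omega⟩
  rintro (i | _ | _) (j | _ | _) h <;> simp only [spinePos] at h
  · have : i.val = j.val := by grind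
    rw [ZMod.val_injective _ this]
  all_goals grind

/-- Four sets of chords between spine positions that contain all edges of `XW_{2k}`: the even and
the odd chain of squares with the Hamiltonian path, then the stars at `q` and at `p`, each with the
edges at `v_1` and `v_2` (positions `2` and `1`) that fit. -/
def pageChords (k : ℕ) : Fin 4 → Set (ℕ × ℕ)
  | 0 => {e | e.2 = e.1 + 1 ∨ (Even e.1 ∧ e.2 = e.1 + 2) ∨ e = (2, 2 * k)}
  | 1 => {e | (Odd e.1 ∧ e.2 = e.1 + 2) ∨ e = (1, 5)}
  | 2 => {e | (e.1 = 3 ∧ e.2 ≤ 2 * k + 1) ∨ e = (2, 2 * k + 1) ∨ e = (1, 2 * k + 1)}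
  | 3 => {e | (e.1 = 0 ∧ 4 ≤ e.2) ∨ e = (1, 4)}

theorem isNoncrossing_pageChords (k : ℕ) (i : Fin 4) : IsNoncrossing (pageChords k i) := by
  rintro ⟨a, b⟩ hab ⟨c, d⟩ hcd
  fin_cases i <;>
    simp only [pageChords, mem_ofPred_eq, Prod.mk.injEq, Nat.even_iff, Nat.odd_iff] at hab hcd ⊢ <;>
    omega

theorem val_add_natCast {n : ℕ} [NeZero n] (i : ZMod n) {c : ℕ} (hc : c < n) :
    (i + c).val = i.val + c ∨ (n ≤ i.val + c ∧ (i + c).val + n = i.val + c) := by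
  have hval := ZMod.val_natCast_of_lt hc
  rcases lt_or_ge (i.val + c) n with hlt | hge
  · exact .inl (by rw [ZMod.val_add_of_lt (by rwa [hval]), hval])
  · have := ZMod.val_add_val_of_le (a := i) (b := (c : ZMod n)) (by rwa [hval])
    exact .inr ⟨hge, by rw [← this, hval]⟩

theorem spinePos_inl_mem {k : ℕ} (hk : k ≠ 0) (i : ZMod (2 * k)) :
    spinePos k (.inl i) = 1 ∨ spinePos k (.inl i) = 2 ∨
      4 ≤ spinePos k (.inl i) ∧ spinePos k (.inl i) ≤ 2 * k + 1 := by
  have : NeZero (2 * k) := ⟨by omega⟩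
  have := i.val_lt
  simp only [spinePos]
  split_ifs <;> omega

theorem spinePos_inl_add_one {k : ℕ} (hk : 2 ≤ k) (i : ZMod (2 * k)) :
    (spinePos k (.inl i) = 2 ∧ spinePos k (.inl (i + 1)) = 1) ∨
    (spinePos k (.inl i) = 1 ∧ spinePos k (.inl (i + 1)) = 4) ∨
    (spinePos k (.inl (i + 1)) = spinePos k (.inl i) + 1) ∨
    (spinePos k (.inl i) = 2 * k + 1 ∧ spinePos k (.inl (i + 1)) = 2) := by
  have : NeZero (2 * k) := ⟨by omega⟩
  have := i.val_lt
  have hval := val_add_natCast i (c := 1) (by omega)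
  rw [Nat.cast_one] at hval
  have := (i + 1).val_lt
  simp only [spinePos]
  split_ifs <;> omega

theorem spinePos_inl_add_two {k : ℕ} (hk : 2 ≤ k) (i : ZMod (2 * k)) :
    (spinePos k (.inl i) = 1 ∧ spinePos k (.inl (i + 2)) = 5) ∨
    (spinePos k (.inl (i + 2)) = spinePos k (.inl i) + 2) ∨
    (spinePos k (.inl i) = 2 * k ∧ spinePos k (.inl (i + 2)) = 2) ∨
    (spinePos k (.inl i) = 2 * k + 1 ∧ spinePos k (.inl (i + 2)) = 1) := by
  have : NeZero (2 * k) := ⟨by omega⟩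
  have := i.val_lt
  have hval := val_add_natCast i (c := 2) (by omega)
  rw [Nat.cast_ofNat] at hval
  have := (i + 2).val_lt
  simp only [spinePos]
  split_ifs <;> omega

theorem exists_spineChord_cycleEdge_mem {k : ℕ} (hk : 2 ≤ k) (i : ZMod (2 * k)) :
    ∃ j, spineChord (spinePos k) s(.inl i, .inl (i + 1)) ∈ pageChords k j := by
  rcases spinePos_inl_add_one hk i with ⟨hi, hnext⟩ | ⟨hi, hnext⟩ | hnext | ⟨hi, hnext⟩
  · exact ⟨0, by simp [spineChord_mk, pageChords, hi, hnext]⟩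
  · exact ⟨3, by simp [spineChord_mk, pageChords, hi, hnext]⟩
  · exact ⟨0, by simp [spineChord_mk, pageChords, hnext]⟩
  · exact ⟨2, by simp [spineChord_mk, pageChords, hi, hnext, show 1 ≤ 2 * k by omega]⟩

theorem exists_spineChord_square_mem {k : ℕ} (hk : 2 ≤ k) (i : ZMod (2 * k)) :
    ∃ j, spineChord (spinePos k) s(.inl i, .inl (i + 2)) ∈ pageChords k j := by
  rcases spinePos_inl_add_two hk i with ⟨hi, hnext⟩ | hnext | ⟨hi, hnext⟩ | ⟨hi, hnext⟩
  · exact ⟨1, by simp [spineChord_mk, pageChords, hi, hnext]⟩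
  · rcases Nat.even_or_odd (spinePos k (.inl i)) with heven | hodd
    · exact ⟨0, by simp [spineChord_mk, pageChords, hnext, heven]⟩
    · exact ⟨1, by simp [spineChord_mk, pageChords, hnext, hodd]⟩
  · exact ⟨0, by simp [spineChord_mk, pageChords, hi, hnext, show 2 ≤ 2 * k by omega]⟩
  · exact ⟨2, by simp [spineChord_mk, pageChords, hi, hnext]⟩

theorem exists_spineChord_poleEdge_mem {k : ℕ} (hk : k ≠ 0) (i : ZMod (2 * k)) (b : Bool) :
    ∃ j, spineChord (spinePos k) s(.inl i, .inr b) ∈ pageChords k j := by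
  have hp : spinePos k (.inr true) = 0 := rfl
  have hq : spinePos k (.inr false) = 3 := rfl
  rcases b with _ | _ <;> rcases spinePos_inl_mem hk i with hi | hi | hi
  · exact ⟨1, by simp [spineChord_mk, pageChords, hi, hq]⟩
  · exact ⟨0, by simp [spineChord_mk, pageChords, hi, hq]⟩
  · have : 3 ≤ spinePos k (.inl i) := by omega
    exact ⟨2, by simp [spineChord_mk, pageChords, hi.2, hq, this]⟩
  · exact ⟨0, by simp [spineChord_mk, pageChords, hi, hp]⟩
  · exact ⟨0, by simp [spineChord_mk, pageChords, hi, hp]⟩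
  · exact ⟨3, by simp [spineChord_mk, pageChords, hi, hp]⟩

theorem nonempty_bookEmbedding {k : ℕ} (hk : 2 ≤ k) :
    Nonempty ((extendedWheel k).BookEmbedding 4) := by
  refine SimpleGraph.BookEmbedding.nonempty_of_forall_mem_isNoncrossing
    (spinePos_injective (by omega)) (isNoncrossing_pageChords k) ?_
  rw [edgeSet_eq_range_edge hk]
  rintro _ ⟨⟨c, i⟩, rfl⟩
  fin_cases c
  · exact exists_spineChord_cycleEdge_mem hk i
  · exact exists_spineChord_square_mem hk i
  · exact exists_spineChord_poleEdge_mem (by omega) i true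
  · exact exists_spineChord_poleEdge_mem (by omega) i false

theorem four_le_of_bookEmbedding {k m : ℕ} (hk : 3 ≤ k) (B : (extendedWheel k).BookEmbedding m) :
    4 ≤ m := by
  have : NeZero (2 * k) := ⟨by omega⟩
  have hcard : Nat.card (ZMod (2 * k) ⊕ Bool) = 2 * k + 2 := by simp
  have hedges := ncard_edgeSet hk
  exact B.four_le_of_le_ncard_edgeSet (by omega) (by omega)

end extendedWheel

/-- **For every `k ≥ 3`, the extended wheel graph `XW_{2k}` has book thickness exactly
four**: it admits a 4-page book embedding, and (being an optimal 1-planar graph) its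
book thickness is at least four. -/
theorem extendedWheel_bookThickness_eq_four (k : ℕ) (hk : 3 ≤ k) :
    Nonempty ((extendedWheel k).BookEmbedding 4) ∧
      (extendedWheel k).bookThickness = 4 := by
  have hupper := extendedWheel.nonempty_bookEmbedding (k := k) (by omega)
  refine ⟨hupper, le_antisymm (Nat.sInf_le hupper) (le_csInf ⟨4, hupper⟩ ?_)⟩
  rintro m ⟨B⟩
  exact extendedWheel.four_le_of_bookEmbedding hk B
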